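/- Let A be an m×m real matrix and b, d ∈ ℝ^m with b·1_m = 1, b·d = 1/2 and b·(A·d) = 1/6; let c_1, …, c_{s+1} be reals with c_1 = 0, Δc_i := c_{i+1} − c_i; and let β ∈ ℝ^s satisfy Σ_{ℓ=1}^{s} β_ℓ c_ℓ³ = 1/4. Then Σ_{i=1}^{s} Δc_i·( Σ_{ℓ=i+1}^{s} β_ℓ )·( b·( (1/2)c_i²·1_m + c_iΔc_i·d + Δc_i²·A·d ) ) = 1/24. (This shows the MR-GARK fourth-order coupling condition b^{s T} A^{sf} A^{ff} c^{ff} = 1/24 is automatically satisfied for MRI-GARK schemes.) -/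

import Mathlib

/-!
The order-three conditions of the fast method make `Δc_i` times the inner sum an exact evaluation
of `∫ t² / 2` over `[c_i, c_{i+1}]`, namely `(c_{i+1}³ - c_i³) / 6`. Summation by parts against the
tail sums of `β` then telescopes these increments to `∑ β_ℓ (c_ℓ³ - c_1³) / 6`.
-/

open Finset

theorem sum_Iio_succ_sub_castSucc {M : Type*} [AddCommGroup M] {s : ℕ} (f : Fin (s + 1) → M)
    (a : Fin s) : ∑ i ∈ Iio a, (f i.succ - f i.castSucc) = f a.castSucc - f 0 := by
  rw [← add_left_inj (f a.succ - f a.castSucc), sum_Iio_add_eq_sum_Iic, Fin.sum_Iic_sub]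
  abel

theorem sum_sum_Ioi_smul_succ_sub_castSucc {R M : Type*} [Semiring R] [AddCommGroup M] [Module R M]
    {s : ℕ} (β : Fin s → R) (f : Fin (s + 1) → M) :
    ∑ i, (∑ ℓ ∈ Ioi i, β ℓ) • (f i.succ - f i.castSucc) =
      ∑ ℓ, β ℓ • (f ℓ.castSucc - f 0) := by
  calc
    _ = ∑ i, ∑ ℓ ∈ Ioi i, β ℓ • (f i.succ - f i.castSucc) := by simp only [sum_smul]
    _ = ∑ ℓ, ∑ i ∈ Iio ℓ, β ℓ • (f i.succ - f i.castSucc) :=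
      sum_comm' fun i ℓ ↦ by simp only [mem_univ, mem_Ioi, mem_Iio, true_and, and_true]
    _ = ∑ ℓ, β ℓ • (f ℓ.castSucc - f 0) := by
      simp only [← smul_sum, sum_Iio_succ_sub_castSucc]

theorem sum_mul_const_add_mul_add_mul {ι R : Type*} [CommSemiring R] (s : Finset ι)
    (b d e : ι → R) (u v w : R) :
    ∑ r ∈ s, b r * (u + v * d r + w * e r) =
      u * ∑ r ∈ s, b r + v * ∑ r ∈ s, b r * d r + w * ∑ r ∈ s, b r * e r := by
  simp only [mul_sum, ← sum_add_distrib]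
  exact sum_congr rfl fun r _ ↦ by ring

section FastQuadrature

variable {K ι : Type*} [Field K] [Fintype ι] {b d : ι → K}

theorem sub_mul_sum_eq_cube_sub_cube_div_six (h6 : (6 : K) ≠ 0) {e : ι → K}
    (hb : ∑ r, b r = 1) (hbd : ∑ r, b r * d r = 1 / 2) (hbe : ∑ r, b r * e r = 1 / 6) (x y : K) :
    (y - x) * ∑ r, b r * (1 / 2 * x ^ 2 + x * (y - x) * d r + (y - x) ^ 2 * e r) =
      (y ^ 3 - x ^ 3) / 6 := by
  have six_eq : (6 : K) = 2 * 3 := by norm_num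
  obtain ⟨h2, h3⟩ : (2 : K) ≠ 0 ∧ (3 : K) ≠ 0 := mul_ne_zero_iff.mp (six_eq ▸ h6)
  rw [sum_mul_const_add_mul_add_mul, hb, hbd, hbe, six_eq]
  field_simp
  ring

theorem stmt13_general (h6 : (6 : K) ≠ 0) {s : ℕ} (A : Matrix ι ι K)
    (hb : ∑ r, b r = 1) (hbd : ∑ r, b r * d r = 1 / 2)
    (hbAd : ∑ r, b r * (∑ r', A r r' * d r') = 1 / 6)
    (c : Fin (s + 1) → K) (Δc : Fin s → K) (hΔc : ∀ i, Δc i = c i.succ - c i.castSucc)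
    (β : Fin s → K) :
    ∑ i, Δc i * (∑ ℓ with i < ℓ, β ℓ) *
        (∑ r, b r * (1 / 2 * c i.castSucc ^ 2 + c i.castSucc * Δc i * d r
          + Δc i ^ 2 * ∑ r', A r r' * d r')) =
      (∑ ℓ, β ℓ * (c ℓ.castSucc ^ 3 - c 0 ^ 3)) / 6 := by
  calc
    _ = ∑ i, (∑ ℓ ∈ Ioi i, β ℓ) * ((c i.succ ^ 3 - c i.castSucc ^ 3) / 6) := by
      refine sum_congr rfl fun i _ ↦ ?_
      rw [hΔc, filter_lt_eq_Ioi, mul_right_comm, mul_comm,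
        sub_mul_sum_eq_cube_sub_cube_div_six h6 hb hbd hbAd]
    _ = (∑ i, (∑ ℓ ∈ Ioi i, β ℓ) • (c i.succ ^ 3 - c i.castSucc ^ 3)) / 6 := by
      simp only [smul_eq_mul, sum_div, mul_div_assoc]
    _ = (∑ ℓ, β ℓ * (c ℓ.castSucc ^ 3 - c 0 ^ 3)) / 6 := by
      rw [sum_sum_Ioi_smul_succ_sub_castSucc β (fun k ↦ c k ^ 3)]
      simp only [smul_eq_mul]

end FastQuadrature

/-- Fourth-order MR-GARK coupling condition `b^{sT} A^{sf} A^{ff} c^{ff} = 1/24`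
holds automatically for MRI-GARK schemes: with `b·1 = 1`, `b·d = 1/2`,
`b·(A·d) = 1/6`, `c_1 = 0`, `Δc_i = c_{i+1} − c_i`, and slow weights `β` with
`Σ_ℓ β_ℓ c_ℓ³ = 1/4`, one has
`Σ_i Δc_i (Σ_{ℓ=i+1}^{s} β_ℓ)(b·((1/2)c_i²·1 + c_iΔc_i·d + Δc_i²·A·d)) = 1/24`. -/
theorem stmt13 {m s : ℕ} (A : Matrix (Fin m) (Fin m) ℝ) (b d : Fin m → ℝ)
    (hb1 : ∑ ℓ, b ℓ = 1) (hbd : ∑ ℓ, b ℓ * d ℓ = 1 / 2)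
    (hbAd : ∑ ℓ, b ℓ * (∑ r, A ℓ r * d r) = 1 / 6)
    (c : Fin (s + 1) → ℝ) (hc0 : c 0 = 0)
    (Δc : Fin s → ℝ) (hΔc : ∀ i, Δc i = c i.succ - c i.castSucc)
    (β : Fin s → ℝ) (hβ : ∑ ℓ : Fin s, β ℓ * (c ℓ.castSucc) ^ 3 = 1 / 4) :
    ∑ i : Fin s, Δc i * (∑ ℓ ∈ Finset.univ.filter (fun ℓ : Fin s => i < ℓ), β ℓ)
        * (∑ r, b r * ((1 / 2) * (c i.castSucc) ^ 2 + c i.castSucc * Δc i * d r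
            + (Δc i) ^ 2 * ∑ r', A r r' * d r')) = 1 / 24 := by
  rw [stmt13_general (by norm_num) A hb1 hbd hbAd c Δc hΔc β, hc0]
  norm_num [hβ]
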